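/- Recursion among type-B singular vectors: with ξ_l as below, for l ≥ 1: Δ(e_{n−1})∘Δ(e_{n−2})∘⋯∘Δ(e_1)∘Δ(e_0) applied to ξ_l equals (1/(1−q^{2l+1}))·{(q^{l+1}x + y)ξ_{l+1} + q^l(x + q^l y)Δ(f_n)²ξ_{l−1}}; for l = 0: Δ(e_{n−1})∘⋯∘Δ(e_1)∘Δ(e_0) applied to ξ_0 equals (1/(1−q))·{(qx + y)ξ_1 − i·q^{1/2}(x + y)Δ(f_n)ξ_0}; and for l ≥ 1: Δ(f_0)∘Δ(f_1)∘⋯∘Δ(f_{n−1}) applied to ξ_l equals i·[l]·q^{−1/2}(q^l x^{−1} + y^{−1})·ξ_{l−1} (in each composition the rightmost operator acts first). -/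

import Mathlib

/-!
Every composition in the theorem preserves the span of the vectors `|a·e_n⟩ ⊗ |b·e_n⟩`, so the
theorem reduces to identities between scalar sequences.

Indeed `Δ(e_0)` creates a unit at position `1` in one of the two factors, and each later `Δ(e_i)`
moves this unit one step to the right, until it merges with the last position (`appE_aux`). The
factor `k_i` sees empty positions except at the two ends, so that, with `p² = -q⁻¹`,
* `Δ(e_{n-1}) ⋯ Δ(e_0)` sends `|a⟩⊗|b⟩` to `y |a⟩⊗|b+1⟩ + x p⁻¹ q^b |a+1⟩⊗|b⟩` (`appE`),
* `Δ(f_0) ⋯ Δ(f_{n-1})` sends it to `x⁻¹ [a] |a-1⟩⊗|b⟩ + p y⁻¹ q^{-a} [b] |a⟩⊗|b-1⟩` (`appF`),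
* `Δ(f_n)` sends it to `|a+1⟩⊗|b⟩ + p⁻¹ q^a |a⟩⊗|b+1⟩` (`dFB_last`).

Put `s = (-p)⁻¹` and let `c_{l,m}` be the coefficients of `ξ_l`. The two `q`-Pascal rules become
`c_{l+1,m} = c_{l,m} + s q^{2l+1-m} c_{l,m-1} = q^{2m} c_{l,m} + s q^{m-1} c_{l,m-1}`. Using the
second rule twice, together with `s² = -q`, the coefficients of `Δ(f_n)² ξ_{l-1}` collapse to
`-q c_{l,m} - s q^{1-m} c_{l,m-1}` (`coeff_ff`); after this the raising recursion is a consequence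
of the first rule (`coeff_raise`). The lowering recursion follows from
`[m] [l choose m] = [l] [l-1 choose m-1]` and its mirror image (`cf_lower₁`, `cf_lower₂`).
-/


open scoped BigOperators

set_option synthInstance.maxHeartbeats 1000000
set_option maxHeartbeats 1000000

noncomputable section

namespace TetraGQ

/-! ## Scalar ingredients -/

/-- `(a;qb)_m = ∏_{k=0}^{m-1} (1 - a qb^k)`. -/
def poch (qb a : ℂ) (m : ℕ) : ℂ := ∏ k ∈ Finset.range m, (1 - a * qb ^ k)

/-- The `q`-binomial `binom(m,k)_qb`, zero unless `k ≤ m`. -/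
def qbinom (qb : ℂ) (m k : ℕ) : ℂ :=
  if k ≤ m then poch qb qb m / (poch qb qb k * poch qb qb (m - k)) else 0

/-- `[m] = (q^m - q^{-m})/(q - q^{-1})`. -/
def qnum (q : ℂ) (m : ℕ) : ℂ := (q ^ m - q⁻¹ ^ m) / (q - q⁻¹)

/-- `[m]! = ∏_{k=1}^m [k]`. -/
def qfac (q : ℂ) (m : ℕ) : ℂ := ∏ k ∈ Finset.range m, qnum q (k + 1)

/-- The symmetric `q`-binomial `[m choose k]`, zero unless `k ≤ m`. -/
def qbin (q : ℂ) (m k : ℕ) : ℂ :=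
  if k ≤ m then qfac q m / (qfac q k * qfac q (m - k)) else 0

/-- The 3D `R` matrix entry `R^{a,b,c}_{i,j,k}`. -/
def R3 (q : ℂ) (a b c i j k : ℕ) : ℂ :=
  (if a + b = i + j ∧ b + c = j + k then (1 : ℂ) else 0) *
    ∑ lam ∈ Finset.range (b + 1),
      (-1 : ℂ) ^ lam *
        q ^ ((i : ℤ) * ((c : ℤ) - (j : ℤ)) + ((k : ℤ) + 1) * (lam : ℤ) +
            ((b : ℤ) - (lam : ℤ)) * ((b : ℤ) - (lam : ℤ) - (k : ℤ))) *
        (poch (q ^ 2) (q ^ 2) (c + (b - lam)) / poch (q ^ 2) (q ^ 2) c) *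
        qbinom (q ^ 2) i (b - lam) * qbinom (q ^ 2) j lam

/-- The 3D `L` matrix entry `L^{a,b,c}_{i,j,k}`. -/
def L3 (q : ℂ) (a b c i j k : ℕ) : ℂ :=
  if a = 0 ∧ b = 0 ∧ i = 0 ∧ j = 0 ∧ c = k then 1
  else if a = 1 ∧ b = 1 ∧ i = 1 ∧ j = 1 ∧ c = k then 1
  else if a = 0 ∧ b = 1 ∧ i = 0 ∧ j = 1 ∧ c = k then -q ^ (k + 1)
  else if a = 1 ∧ b = 0 ∧ i = 1 ∧ j = 0 ∧ c = k then q ^ k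
  else if a = 0 ∧ b = 1 ∧ i = 1 ∧ j = 0 ∧ c + 1 = k then 1 - q ^ (2 * k)
  else if a = 1 ∧ b = 0 ∧ i = 0 ∧ j = 1 ∧ c = k + 1 then 1
  else 0

/-- `S^(0) = R`, `S^(1) = L`. -/
def Sg (q : ℂ) (e : Bool) (a b c i j k : ℕ) : ℂ :=
  if e then L3 q a b c i j k else R3 q a b c i j k

/-- Coefficient of `z^{c0}` in the trace solution matrix element
`S₀(z)^{a,b}_{i,j}`. -/
def trCoef (q : ℂ) {n : ℕ} [NeZero n] (ε : Fin n → Bool) (a b i j : Fin n → ℕ)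
    (c0 : ℕ) : ℂ :=
  ∑ᶠ c : Fin n → ℕ,
    if c 0 = c0 then
      ∏ t : Fin n, Sg q (ε t) (a t) (b t) (c t) (i t) (j t) (c (t + 1))
    else 0

/-- Coefficient of `z^{c0}` in the boundary solution matrix element
`S₀^{1,1}(z)^{a,b}_{i,j}`. -/
def bdCoef (q : ℂ) {n : ℕ} (ε : Fin n → Bool) (a b i j : Fin n → ℕ) (c0 : ℕ) : ℂ :=
  ∑ᶠ c : Fin (n + 1) → ℕ,
    if c 0 = c0 then
      poch (q ^ 2) (q ^ 2) c0 / (poch q q c0 * poch q q (c (Fin.last n))) *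
        ∏ t : Fin n, Sg q (ε t) (a t) (b t) (c t.castSucc) (i t) (j t) (c t.succ)
    else 0

/-- Coefficient of `z^{c0}` in the boundary solution matrix element
`S₀^{s,t}(z)^{a,b}_{i,j}`. -/
def bdCoefST (q : ℂ) (s t : ℕ) {n : ℕ} (ε : Fin n → Bool) (a b i j : Fin n → ℕ)
    (c0 : ℕ) : ℂ :=
  ∑ᶠ c : Fin (n + 1) → ℕ,
    if c 0 = c0 then
      poch (q ^ 2) (q ^ 2) (s * c0) /
          (poch (q ^ s ^ 2) (q ^ s ^ 2) c0 * poch (q ^ t ^ 2) (q ^ t ^ 2) (c (Fin.last n))) *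
        ∏ u : Fin n,
          Sg q (ε u) (a u) (b u)
            (if u.castSucc = 0 then s * c0 else c u.castSucc) (i u) (j u)
            (if u.succ = Fin.last n then t * c (Fin.last n) else c u.succ)
    else 0

/-! ## The spaces `𝒲` and `𝒲⊗𝒲` -/

/-- `m` is an admissible occupation vector: at positions with `ε = 1` the entry is `≤ 1`. -/
def Ok {n : ℕ} (ε : Fin n → Bool) (m : Fin n → ℕ) : Prop := ∀ t, ε t = true → m t ≤ 1

instance {n : ℕ} (ε : Fin n → Bool) : DecidablePred (Ok ε) := fun m =>
  decidable_of_iff (∀ t, ε t = true → m t ≤ 1) Iff.rfl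

/-- Basis labels of `𝒲`. -/
def Idx {n : ℕ} (ε : Fin n → Bool) : Type := {m : Fin n → ℕ // Ok ε m}

/-- The space `𝒲` with basis `|m⟩`, over the field `L`. -/
abbrev W (L : Type) [Field L] {n : ℕ} (ε : Fin n → Bool) : Type := Idx ε →₀ L

/-- The space `𝒲 ⊗ 𝒲` with basis `|a⟩⊗|b⟩`, over the field `L`. -/
abbrev WW (L : Type) [Field L] {n : ℕ} (ε : Fin n → Bool) : Type := (Idx ε × Idx ε) →₀ L

/-- The ket `|m⟩ ∈ 𝒲`; it is `0` if any coordinate is out of range. -/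
def ket (L : Type) [Field L] {n : ℕ} (ε : Fin n → Bool) (m : Fin n → ℤ) : W L ε :=
  if h : (∀ t, 0 ≤ m t) ∧ Ok ε (fun t => (m t).toNat) then
    Finsupp.single ⟨fun t => (m t).toNat, h.2⟩ 1
  else 0

/-- The ket `|a⟩⊗|b⟩ ∈ 𝒲⊗𝒲`; it is `0` if any coordinate is out of range. -/
def kk (L : Type) [Field L] {n : ℕ} (ε : Fin n → Bool) (a b : Fin n → ℤ) : WW L ε :=
  if h : ((∀ t, 0 ≤ a t) ∧ Ok ε (fun t => (a t).toNat)) ∧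
      ((∀ t, 0 ≤ b t) ∧ Ok ε (fun t => (b t).toNat)) then
    Finsupp.single (⟨fun t => (a t).toNat, h.1.2⟩, ⟨fun t => (b t).toNat, h.2.2⟩) 1
  else 0

/-- The linear endomorphism of a free module determined by images of basis vectors. -/
def mkEnd (L : Type) [Field L] {α : Type} (v : α → (α →₀ L)) :
    (α →₀ L) →ₗ[L] (α →₀ L) :=
  Finsupp.lsum L fun m => LinearMap.toSpanSingleton L (α →₀ L) (v m)

/-- Product of vectors of `𝒲`, landing in `𝒲⊗𝒲`. -/
def tens (L : Type) [Field L] {n : ℕ} {ε : Fin n → Bool} (u v : W L ε) : WW L ε :=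
  u.sum fun a ca => v.sum fun b cb => Finsupp.single (a, b) (ca * cb)

/-- The operator `A ⊗ B` on `𝒲⊗𝒲`. -/
def opT (L : Type) [Field L] {n : ℕ} {ε : Fin n → Bool}
    (A B : W L ε →ₗ[L] W L ε) : WW L ε →ₗ[L] WW L ε :=
  mkEnd L fun mm => tens L (A (Finsupp.single mm.1 1)) (B (Finsupp.single mm.2 1))

/-- The subspace `𝒲_l ⊗ 𝒲_m` of `𝒲⊗𝒲`. -/
def WWlm (L : Type) [Field L] {n : ℕ} (ε : Fin n → Bool) (l m : ℕ) :
    Submodule L (WW L ε) :=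
  Submodule.span L {v | ∃ p : Idx ε × Idx ε,
    (∑ t, p.1.1 t) = l ∧ (∑ t, p.2.1 t) = m ∧ v = Finsupp.single p 1}

/-- The subspace `𝒲_l` of `𝒲`. -/
def Wl (L : Type) [Field L] {n : ℕ} (ε : Fin n → Bool) (l : ℕ) : Submodule L (W L ε) :=
  Submodule.span L {v | ∃ p : Idx ε, (∑ t, p.1 t) = l ∧ v = Finsupp.single p 1}

/-! ## The scalar field of formal Laurent series in `z` over `ℂ` -/

abbrev K : Type := LaurentSeries ℂ

/-- The power series `Σ_{c≥0} f(c) z^c` as an element of `K`. -/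
def mkS (f : ℕ → ℂ) : K := HahnSeries.ofPowerSeries ℤ ℂ (PowerSeries.mk f)

/-- Constants `ℂ → K`. -/
def cK : ℂ →+* K := HahnSeries.C

/-- The variable `z ∈ K`. -/
def zK : K := mkS fun c => if c = 1 then 1 else 0

/-! ## The solutions of the Yang-Baxter equation -/

/-- The unnormalized trace solution `S₀(z)` acting on `𝒲⊗𝒲`. -/
def S0tr (q : ℂ) {n : ℕ} [NeZero n] (ε : Fin n → Bool) : WW K ε →ₗ[K] WW K ε :=
  mkEnd K fun ij =>
    ∑ a ∈ Fintype.piFinset (fun t => Finset.range (ij.1.1 t + ij.2.1 t + 1)),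
      mkS (trCoef q ε a (fun t => ij.1.1 t + ij.2.1 t - a t) ij.1.1 ij.2.1) •
        kk K ε (fun t => (a t : ℤ)) (fun t => (ij.1.1 t : ℤ) + (ij.2.1 t : ℤ) - (a t : ℤ))

/-- The unnormalized boundary solution `S₀^{1,1}(z)` acting on `𝒲⊗𝒲`. -/
def S0bd (q : ℂ) {n : ℕ} (ε : Fin n → Bool) : WW K ε →ₗ[K] WW K ε :=
  mkEnd K fun ij =>
    ∑ a ∈ Fintype.piFinset (fun t => Finset.range (ij.1.1 t + ij.2.1 t + 1)),
      mkS (bdCoef q ε a (fun t => ij.1.1 t + ij.2.1 t - a t) ij.1.1 ij.2.1) •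
        kk K ε (fun t => (a t : ℤ)) (fun t => (ij.1.1 t : ℤ) + (ij.2.1 t : ℤ) - (a t : ℤ))

/-- The unnormalized boundary solution `S₀^{s,t}(z)` acting on `𝒲⊗𝒲`. -/
def S0bdST (q : ℂ) (s t : ℕ) {n : ℕ} (ε : Fin n → Bool) : WW K ε →ₗ[K] WW K ε :=
  mkEnd K fun ij =>
    ∑ a ∈ Fintype.piFinset (fun u => Finset.range (ij.1.1 u + ij.2.1 u + 1)),
      mkS (bdCoefST q s t ε a (fun u => ij.1.1 u + ij.2.1 u - a u) ij.1.1 ij.2.1) •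
        kk K ε (fun u => (a u : ℤ)) (fun u => (ij.1.1 u : ℤ) + (ij.2.1 u : ℤ) - (a u : ℤ))

/-- The diagonal gauge operator; `Kdiag pc ε s |m⟩ = pc^{s·(m₁+⋯+m_n)} |m⟩`
(`s = -1` gives `K`, `s = 1` gives `K⁻¹`). -/
def Kdiag (pc : ℂ) {n : ℕ} (ε : Fin n → Bool) (s : ℤ) : W K ε →ₗ[K] W K ε :=
  mkEnd K fun m => cK (pc ^ (s * ∑ t, (m.1 t : ℤ))) • Finsupp.single m 1

/-- The gauge transformed boundary solution `S̃₀^{1,1}(z) = (K⊗1) S₀^{1,1}(z) (1⊗K⁻¹)`. -/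
def S0bdT (q pc : ℂ) {n : ℕ} (ε : Fin n → Bool) : WW K ε →ₗ[K] WW K ε :=
  opT K (Kdiag pc ε (-1)) LinearMap.id ∘ₗ S0bd q ε ∘ₗ opT K LinearMap.id (Kdiag pc ε 1)

/-! ## The generalized quantum group actions -/

/-- Value of an occupation vector at a natural-number position. -/
def av {n : ℕ} (m : Fin n → ℕ) (p : ℕ) : ℕ := if h : p < n then m ⟨p, h⟩ else 0

/-- Unit coordinate vector at a natural-number position. -/
def dlt {n : ℕ} (p : ℕ) : Fin n → ℤ := fun t => if (t : ℕ) = p then 1 else 0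

/-- `q_i = q` if `ε_i = 0` and `-q⁻¹` if `ε_i = 1` (0-based positions). -/
def qc (q : ℂ) {n : ℕ} (ε : Fin n → Bool) (p : ℕ) : ℂ :=
  if h : p < n then (if ε ⟨p, h⟩ then -q⁻¹ else q) else q

/-- Type A generator `e_r` of the action `π_x`. -/
def eA (q : ℂ) {L : Type} [Field L] (ι : ℂ →+* L) {n : ℕ} (ε : Fin n → Bool) (x : L)
    (r : Fin n) : W L ε →ₗ[L] W L ε :=
  mkEnd L fun m =>
    (x ^ (if (r : ℕ) = 0 then 1 else 0) * ι (qnum q (av m.1 (((r : ℕ) + n - 1) % n)))) •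
      ket L ε fun t => (m.1 t : ℤ) - dlt (((r : ℕ) + n - 1) % n) t + dlt (r : ℕ) t

/-- Type A generator `f_r` of the action `π_x`. -/
def fA (q : ℂ) {L : Type} [Field L] (ι : ℂ →+* L) {n : ℕ} (ε : Fin n → Bool) (x : L)
    (r : Fin n) : W L ε →ₗ[L] W L ε :=
  mkEnd L fun m =>
    (x ^ (if (r : ℕ) = 0 then (-1 : ℤ) else 0) * ι (qnum q (av m.1 (r : ℕ)))) •
      ket L ε fun t => (m.1 t : ℤ) + dlt (((r : ℕ) + n - 1) % n) t - dlt (r : ℕ) t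

/-- Type A generator `k_r^{s}` (`s = ±1`) of the action `π_x`. -/
def kA (q : ℂ) {L : Type} [Field L] (ι : ℂ →+* L) {n : ℕ} (ε : Fin n → Bool) (s : ℤ)
    (r : Fin n) : W L ε →ₗ[L] W L ε :=
  mkEnd L fun m =>
    ι ((qc q ε (((r : ℕ) + n - 1) % n) ^ (-(av m.1 (((r : ℕ) + n - 1) % n) : ℤ)) *
        qc q ε (r : ℕ) ^ (av m.1 (r : ℕ) : ℤ)) ^ s) • Finsupp.single m 1

/-- Type B generator `e_r` of the action `π_x`. -/
def eB (q : ℂ) {L : Type} [Field L] (ι : ℂ →+* L) {n : ℕ} (ε : Fin n → Bool) (x : L)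
    (r : Fin (n + 1)) : W L ε →ₗ[L] W L ε :=
  mkEnd L fun m =>
    if (r : ℕ) = 0 then x • ket L ε (fun t => (m.1 t : ℤ) + dlt 0 t)
    else if (r : ℕ) = n then
      ι (qnum q (av m.1 (n - 1))) • ket L ε (fun t => (m.1 t : ℤ) - dlt (n - 1) t)
    else
      ι (qnum q (av m.1 ((r : ℕ) - 1))) •
        ket L ε (fun t => (m.1 t : ℤ) - dlt ((r : ℕ) - 1) t + dlt (r : ℕ) t)

/-- Type B generator `f_r` of the action `π_x`. -/
def fB (q : ℂ) {L : Type} [Field L] (ι : ℂ →+* L) {n : ℕ} (ε : Fin n → Bool) (x : L)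
    (r : Fin (n + 1)) : W L ε →ₗ[L] W L ε :=
  mkEnd L fun m =>
    if (r : ℕ) = 0 then
      (x⁻¹ * ι (qnum q (av m.1 0))) • ket L ε (fun t => (m.1 t : ℤ) - dlt 0 t)
    else if (r : ℕ) = n then ket L ε (fun t => (m.1 t : ℤ) + dlt (n - 1) t)
    else
      ι (qnum q (av m.1 (r : ℕ))) •
        ket L ε (fun t => (m.1 t : ℤ) + dlt ((r : ℕ) - 1) t - dlt (r : ℕ) t)

/-- Type B generator `k_r^{s}` (`s = ±1`) of the action `π_x`; `pc = i q^{-1/2}`. -/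
def kB (q pc : ℂ) {L : Type} [Field L] (ι : ℂ →+* L) {n : ℕ} (ε : Fin n → Bool) (s : ℤ)
    (r : Fin (n + 1)) : W L ε →ₗ[L] W L ε :=
  mkEnd L fun m =>
    ι ((if (r : ℕ) = 0 then pc⁻¹ * qc q ε 0 ^ (av m.1 0 : ℤ)
        else if (r : ℕ) = n then pc * qc q ε (n - 1) ^ (-(av m.1 (n - 1) : ℤ))
        else qc q ε ((r : ℕ) - 1) ^ (-(av m.1 ((r : ℕ) - 1) : ℤ)) *
          qc q ε (r : ℕ) ^ (av m.1 (r : ℕ) : ℤ)) ^ s) • Finsupp.single m 1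

/-! ## Coproduct actions on `𝒲⊗𝒲` (type A) -/

/-- `Δ(e_r) = 1⊗e_r + e_r⊗k_r`, with `π_x` on the first factor, `π_y` on the second. -/
def dE (q : ℂ) {L : Type} [Field L] (ι : ℂ →+* L) {n : ℕ} (ε : Fin n → Bool) (x y : L)
    (r : Fin n) : WW L ε →ₗ[L] WW L ε :=
  opT L LinearMap.id (eA q ι ε y r) + opT L (eA q ι ε x r) (kA q ι ε 1 r)

/-- `Δ'(e_r) = e_r⊗1 + k_r⊗e_r`. -/
def dE' (q : ℂ) {L : Type} [Field L] (ι : ℂ →+* L) {n : ℕ} (ε : Fin n → Bool) (x y : L)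
    (r : Fin n) : WW L ε →ₗ[L] WW L ε :=
  opT L (eA q ι ε x r) LinearMap.id + opT L (kA q ι ε 1 r) (eA q ι ε y r)

/-- `Δ(f_r) = f_r⊗1 + k_r⁻¹⊗f_r`. -/
def dF (q : ℂ) {L : Type} [Field L] (ι : ℂ →+* L) {n : ℕ} (ε : Fin n → Bool) (x y : L)
    (r : Fin n) : WW L ε →ₗ[L] WW L ε :=
  opT L (fA q ι ε x r) LinearMap.id + opT L (kA q ι ε (-1) r) (fA q ι ε y r)

/-- `Δ'(f_r) = 1⊗f_r + f_r⊗k_r⁻¹`. -/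
def dF' (q : ℂ) {L : Type} [Field L] (ι : ℂ →+* L) {n : ℕ} (ε : Fin n → Bool) (x y : L)
    (r : Fin n) : WW L ε →ₗ[L] WW L ε :=
  opT L LinearMap.id (fA q ι ε y r) + opT L (fA q ι ε x r) (kA q ι ε (-1) r)

/-- `Δ(k_r^s) = Δ'(k_r^s) = k_r^s ⊗ k_r^s`. -/
def dK (q : ℂ) {L : Type} [Field L] (ι : ℂ →+* L) {n : ℕ} (ε : Fin n → Bool) (s : ℤ)
    (r : Fin n) : WW L ε →ₗ[L] WW L ε :=
  opT L (kA q ι ε s r) (kA q ι ε s r)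

/-! ## Coproduct actions on `𝒲⊗𝒲` (type B) -/

def dEB (q pc : ℂ) {L : Type} [Field L] (ι : ℂ →+* L) {n : ℕ} (ε : Fin n → Bool) (x y : L)
    (r : Fin (n + 1)) : WW L ε →ₗ[L] WW L ε :=
  opT L LinearMap.id (eB q ι ε y r) + opT L (eB q ι ε x r) (kB q pc ι ε 1 r)

def dEB' (q pc : ℂ) {L : Type} [Field L] (ι : ℂ →+* L) {n : ℕ} (ε : Fin n → Bool) (x y : L)
    (r : Fin (n + 1)) : WW L ε →ₗ[L] WW L ε :=
  opT L (eB q ι ε x r) LinearMap.id + opT L (kB q pc ι ε 1 r) (eB q ι ε y r)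

def dFB (q pc : ℂ) {L : Type} [Field L] (ι : ℂ →+* L) {n : ℕ} (ε : Fin n → Bool) (x y : L)
    (r : Fin (n + 1)) : WW L ε →ₗ[L] WW L ε :=
  opT L (fB q ι ε x r) LinearMap.id + opT L (kB q pc ι ε (-1) r) (fB q ι ε y r)

def dFB' (q pc : ℂ) {L : Type} [Field L] (ι : ℂ →+* L) {n : ℕ} (ε : Fin n → Bool) (x y : L)
    (r : Fin (n + 1)) : WW L ε →ₗ[L] WW L ε :=
  opT L LinearMap.id (fB q ι ε y r) + opT L (fB q ι ε x r) (kB q pc ι ε (-1) r)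

def dKB (q pc : ℂ) {L : Type} [Field L] (ι : ℂ →+* L) {n : ℕ} (ε : Fin n → Bool) (s : ℤ)
    (r : Fin (n + 1)) : WW L ε →ₗ[L] WW L ε :=
  opT L (kB q pc ι ε s r) (kB q pc ι ε s r)

/-! ## Structure constants -/

/-- Type A structure constant `D_{i,j}` (as a product over 0-based positions). -/
def DA (q : ℂ) {n : ℕ} (ε : Fin n → Bool) (i j : Fin n) : ℂ :=
  ∏ p ∈ (({((i : ℕ) + n - 1) % n, (i : ℕ)} : Finset ℕ) ∩
      ({((j : ℕ) + n - 1) % n, (j : ℕ)} : Finset ℕ)),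
    qc q ε p ^ (if i = j then (1 : ℤ) else -1)

/-- The set `⟨i⟩ = {i, i+1} ∩ [1,n]` of type B, translated to 0-based positions. -/
def nodeB (n i : ℕ) : Finset ℕ :=
  if i = 0 then {0} else if i = n then {n - 1} else {i - 1, i}

/-- Type B structure constant `D_{i,j}`. -/
def DB (q : ℂ) {n : ℕ} (ε : Fin n → Bool) (i j : Fin (n + 1)) : ℂ :=
  ∏ p ∈ nodeB n (i : ℕ) ∩ nodeB n (j : ℕ), qc q ε p ^ (if i = j then (1 : ℤ) else -1)

/-! ## Distinguished vectors -/

/-- The vector `J_{n,j} = Σ_{i, Σi=j} q^{inv(i)} |i⟩⊗|1-i⟩`. -/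
def Jfull (q : ℂ) {L : Type} [Field L] (ι : ℂ →+* L) {n : ℕ} (ε : Fin n → Bool)
    (j : ℕ) : WW L ε :=
  ∑ i ∈ Fintype.piFinset (fun _ : Fin n => Finset.range 2),
    (if (∑ t, i t) = j then
        ι (q ^ (∑ s : Fin n, ∑ t : Fin n, if s < t then i s * (1 - i t) else 0))
      else 0) •
      kk L ε (fun t => (i t : ℤ)) (fun t => 1 - (i t : ℤ))

/-- Extension of a `Fin s`-tuple to `ℕ` by zero. -/
def ivf {s : ℕ} (i : Fin s → ℕ) : ℕ → ℕ := fun p => if h : p < s then i ⟨p, h⟩ else 0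

/-- `inv(i₁,…,i_s) = Σ_{p<r} i_p (1 - i_r)`. -/
def invv (s : ℕ) (iv : ℕ → ℕ) : ℕ :=
  ∑ p ∈ Finset.range s, ∑ r ∈ Finset.range s, if p < r then iv p * (1 - iv r) else 0

/-- Occupation vector `(0^{nn-s-t}, i₁,…,i_s, 1^t)`. -/
def winA (nn s t : ℕ) (iv : ℕ → ℕ) : Fin nn → ℤ := fun u =>
  if (u : ℕ) < nn - s - t then 0
  else if (u : ℕ) < nn - t then (iv ((u : ℕ) - (nn - s - t)) : ℤ)
  else 1

/-- The singular vector `ξ_t^{l,m}` for `κ = n`. -/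
def xiA (q : ℂ) {L : Type} [Field L] (ι : ℂ →+* L) {n : ℕ} (ε : Fin n → Bool)
    (l m t : ℕ) : WW L ε :=
  ∑ i ∈ Fintype.piFinset (fun _ : Fin (l + m - 2 * t) => Finset.range 2),
    (if (∑ u, i u) = l - t then ι (q ^ invv (l + m - 2 * t) (ivf i)) else 0) •
      kk L ε (winA n (l + m - 2 * t) t (ivf i))
        (winA n (l + m - 2 * t) t (fun p => 1 - ivf i p))

/-- Occupation vector `(0^{nn-s-1}, i₁,…,i_s, last)`. -/
def winA1 (nn s : ℕ) (iv : ℕ → ℕ) (last : ℤ) : Fin nn → ℤ := fun u =>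
  if (u : ℕ) < nn - s - 1 then 0
  else if (u : ℕ) < nn - 1 then (iv ((u : ℕ) - (nn - s - 1)) : ℤ)
  else last

/-- The singular vector `ξ_s^{l,m}` for `κ = n-1`. -/
def xiA1 (q : ℂ) {L : Type} [Field L] (ι : ℂ →+* L) {n : ℕ} (ε : Fin n → Bool)
    (l m s : ℕ) : WW L ε :=
  ∑ j ∈ Finset.range (s + 1),
    ∑ i ∈ Fintype.piFinset (fun _ : Fin s => Finset.range 2),
      (if (∑ u, i u) = s - j then
          ι ((-1 : ℂ) ^ j * q ^ (j * (m - s + 1)) * q ^ invv s (ivf i))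
        else 0) •
        kk L ε (winA1 n s (ivf i) ((l : ℤ) + (j : ℤ) - (s : ℤ)))
          (winA1 n s (fun p => 1 - ivf i p) ((m : ℤ) - (j : ℤ)))

/-- The singular vector `ξ_s^{l,m}` for `0 ≤ κ ≤ n-2`. -/
def xiA2 (q : ℂ) {L : Type} [Field L] (ι : ℂ →+* L) {n : ℕ} (ε : Fin n → Bool)
    (l m s : ℕ) : WW L ε :=
  ∑ j ∈ Finset.range (s + 1),
    ι ((-1 : ℂ) ^ j * q ^ ((j : ℤ) * (2 * (s : ℤ) - (m : ℤ) - (j : ℤ) - 1) + (m : ℤ) * (s : ℤ)) *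
        qbin q s j) •
      kk L ε
        (fun u => if (u : ℕ) < n - 2 then 0
          else if (u : ℕ) = n - 2 then (j : ℤ) else (l : ℤ) - (j : ℤ))
        (fun u => if (u : ℕ) < n - 2 then 0
          else if (u : ℕ) = n - 2 then (s : ℤ) - (j : ℤ) else (m : ℤ) - (s : ℤ) + (j : ℤ))

/-- The type B singular vector `ξ_l`. -/
def xiB (q pc : ℂ) {L : Type} [Field L] (ι : ℂ →+* L) {n : ℕ} (ε : Fin n → Bool)
    (l : ℕ) : WW L ε :=
  ∑ m ∈ Finset.range (l + 1),
    ι ((-pc) ^ (-(m : ℤ)) * q ^ ((m : ℤ) * (l : ℤ) - ((m * (m + 1) / 2 : ℕ) : ℤ)) *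
        qbin q l m) •
      kk L ε (fun u => if (u : ℕ) = n - 1 then (m : ℤ) else 0)
        (fun u => if (u : ℕ) = n - 1 then (l : ℤ) - (m : ℤ) else 0)

/-! ## Miscellany -/

/-- Apply a list of operators, the rightmost element of the list acting first. -/
def appList {L : Type} [Field L] {n : ℕ} {ε : Fin n → Bool}
    (ops : List (WW L ε →ₗ[L] WW L ε)) (v : WW L ε) : WW L ε :=
  ops.foldr (fun A w => A w) v

/-- A natural number as an element of `Fin n`. -/
def mfin {n : ℕ} [NeZero n] (p : ℕ) : Fin n :=
  ⟨p % n, Nat.mod_lt p (Nat.pos_of_ne_zero (NeZero.ne n))⟩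

/-- Reference weight-`l` occupation vector: `(0^{n-l},1^l)` if `κ = n`, `l·e_n` otherwise. -/
def refAN (n κ l : ℕ) : Fin n → ℕ := fun t =>
  if κ = n then (if n - l ≤ (t : ℕ) then 1 else 0) else (if (t : ℕ) = n - 1 then l else 0)

/-- The flip `P(u⊗v) = v⊗u` on `𝒲⊗𝒲`. -/
def Pop (L : Type) [Field L] {n : ℕ} (ε : Fin n → Bool) : WW L ε →ₗ[L] WW L ε :=
  mkEnd L fun p => Finsupp.single (p.2, p.1) 1

section Aux

/-! ### Operators on tensor products of kets -/

lemma mkEnd_single {L : Type} [Field L] {α : Type} (v : α → (α →₀ L)) (a : α) :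
    mkEnd L v (Finsupp.single a 1) = v a := by
  simp [mkEnd]

variable {L : Type} [Field L] {n : ℕ} {ε : Fin n → Bool}

/-- The ket labelled by a vector of natural numbers. -/
def kn (L : Type) [Field L] {n : ℕ} (ε : Fin n → Bool) (m : Fin n → ℕ) : W L ε :=
  ket L ε fun t => (m t : ℤ)

/-- The tensor product of two kets labelled by vectors of natural numbers. -/
def kkn (L : Type) [Field L] {n : ℕ} (ε : Fin n → Bool) (m m' : Fin n → ℕ) : WW L ε :=
  kk L ε (fun t => (m t : ℤ)) fun t => (m' t : ℤ)

/-- An admissible occupation vector as a basis label. -/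
def lab {m : Fin n → ℕ} (h : Ok ε m) : Idx ε := ⟨m, h⟩

lemma kn_eq {m : Fin n → ℕ} (h : Ok ε m) : kn L ε m = Finsupp.single (lab h) 1 := by
  simp [kn, ket, h, lab]

lemma kkn_eq {m m' : Fin n → ℕ} (h : Ok ε m) (h' : Ok ε m') :
    kkn L ε m m' = Finsupp.single (lab h, lab h') 1 := by
  simp [kkn, kk, h, h', lab]

lemma tens_zero_left (v : W L ε) : tens L 0 v = 0 := by
  simp [tens]

lemma tens_zero_right (u : W L ε) : tens L u 0 = 0 := by
  simp [tens]

lemma tens_smul {m m' : Fin n → ℕ} (h : Ok ε m) (h' : Ok ε m') (c d : L) :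
    tens L (c • kn L ε m) (d • kn L ε m') = (c * d) • kkn L ε m m' := by
  rw [kn_eq h, kn_eq h', kkn_eq h h', Finsupp.smul_single, Finsupp.smul_single,
    Finsupp.smul_single, tens, Finsupp.sum_single_index (by simp),
    Finsupp.sum_single_index (by simp)]
  simp

lemma opT_kkn {m m' : Fin n → ℕ} (h : Ok ε m) (h' : Ok ε m') (A B : W L ε →ₗ[L] W L ε) :
    opT L A B (kkn L ε m m') = tens L (A (kn L ε m)) (B (kn L ε m')) := by
  rw [kn_eq h, kn_eq h', kkn_eq h h', opT, mkEnd_single]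

/-- If `A` and `B` scale kets, then so does `A ⊗ B`. -/
lemma opT_smul {m m' k k' : Fin n → ℕ} (h : Ok ε m) (h' : Ok ε m') (hk : Ok ε k) (hk' : Ok ε k')
    {A B : W L ε →ₗ[L] W L ε} {c d : L} (hA : A (kn L ε m) = c • kn L ε k)
    (hB : B (kn L ε m') = d • kn L ε k') :
    opT L A B (kkn L ε m m') = (c * d) • kkn L ε k k' := by
  rw [opT_kkn h h', hA, hB, tens_smul hk hk']

lemma opT_left_zero {m m' : Fin n → ℕ} (h : Ok ε m) (h' : Ok ε m')
    {A B : W L ε →ₗ[L] W L ε} (hA : A (kn L ε m) = 0) :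
    opT L A B (kkn L ε m m') = 0 := by
  rw [opT_kkn h h', hA, tens_zero_left]

lemma opT_right_zero {m m' : Fin n → ℕ} (h : Ok ε m) (h' : Ok ε m')
    {A B : W L ε →ₗ[L] W L ε} (hB : B (kn L ε m') = 0) :
    opT L A B (kkn L ε m m') = 0 := by
  rw [opT_kkn h h', hB, tens_zero_right]

/-! ### Generators on the kets `|a·e_n⟩` and `|a·e_n + e_j⟩` -/

/-- The occupation vector `a·e_n`. -/
def bas (n a : ℕ) : Fin n → ℕ := fun u => if (u : ℕ) = n - 1 then a else 0

/-- The occupation vector `a·e_n + e_{j+1}`; the position `j` is 0-based, so that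
`j = n - 1` gives `(a+1)·e_n`. -/
def basj (n a j : ℕ) : Fin n → ℕ := fun u =>
  (if (u : ℕ) = n - 1 then a else 0) + (if (u : ℕ) = j then 1 else 0)

lemma basj_last (n a : ℕ) : basj n a (n - 1) = bas n (a + 1) := by
  funext u; simp only [basj, bas]; split_ifs <;> omega

lemma ok_bas (hε : ∀ t : Fin n, (t : ℕ) = n - 1 → ε t = false) (a : ℕ) : Ok ε (bas n a) := by
  intro t ht
  have : (t : ℕ) ≠ n - 1 := fun h => by simp [hε t h] at ht
  simp [bas, this]

lemma ok_basj (hε : ∀ t : Fin n, (t : ℕ) = n - 1 → ε t = false) (a j : ℕ) :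
    Ok ε (basj n a j) := by
  intro t ht
  have : (t : ℕ) ≠ n - 1 := fun h => by simp [hε t h] at ht
  simp only [basj, this, if_false]
  split_ifs <;> omega

lemma qc_last (q : ℂ) (hε : ∀ t : Fin n, (t : ℕ) = n - 1 → ε t = false) :
    qc q ε (n - 1) = q := by
  unfold qc
  split_ifs with h1 h2
  · simp [hε ⟨n - 1, h1⟩ rfl] at h2
  · rfl
  · rfl

lemma av_bas {r : ℕ} (hr : r < n) (a : ℕ) : av (bas n a) r = if r = n - 1 then a else 0 := by
  simp [av, bas, hr]

lemma av_basj {r : ℕ} (hr : r < n) (a j : ℕ) :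
    av (basj n a j) r = (if r = n - 1 then a else 0) + (if r = j then 1 else 0) := by
  simp [av, basj, hr]

lemma mfin_val {r : ℕ} (hr : r ≤ n) : ((mfin r : Fin (n + 1)) : ℕ) = r := by
  simp only [mfin]; exact Nat.mod_eq_of_lt (by omega)

lemma qnum_zero (q : ℂ) : qnum q 0 = 0 := by simp [qnum]

lemma sub_inv_ne {q : ℂ} (hq0 : q ≠ 0) (hq : ∀ k : ℕ, k ≠ 0 → q ^ k ≠ 1) : q - q⁻¹ ≠ 0 := by
  intro h
  apply hq 2 (by norm_num)
  field_simp at h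
  linear_combination h

lemma qnum_one {q : ℂ} (hq0 : q ≠ 0) (hq : ∀ k : ℕ, k ≠ 0 → q ^ k ≠ 1) : qnum q 1 = 1 := by
  simp [qnum, div_self (sub_inv_ne hq0 hq)]

variable (q pc : ℂ) (ι : ℂ →+* L) (x : L)

lemma eB_kn {m : Fin n → ℕ} (h : Ok ε m) (r : Fin (n + 1)) :
    eB q ι ε x r (kn L ε m) =
      if (r : ℕ) = 0 then x • ket L ε (fun t => (m t : ℤ) + dlt 0 t)
      else if (r : ℕ) = n then
        ι (qnum q (av m (n - 1))) • ket L ε (fun t => (m t : ℤ) - dlt (n - 1) t)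
      else
        ι (qnum q (av m ((r : ℕ) - 1))) •
          ket L ε (fun t => (m t : ℤ) - dlt ((r : ℕ) - 1) t + dlt (r : ℕ) t) := by
  rw [kn_eq h]
  exact mkEnd_single _ _

lemma fB_kn {m : Fin n → ℕ} (h : Ok ε m) (r : Fin (n + 1)) :
    fB q ι ε x r (kn L ε m) =
      if (r : ℕ) = 0 then
        (x⁻¹ * ι (qnum q (av m 0))) • ket L ε (fun t => (m t : ℤ) - dlt 0 t)
      else if (r : ℕ) = n then ket L ε (fun t => (m t : ℤ) + dlt (n - 1) t)
      else
        ι (qnum q (av m (r : ℕ))) •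
          ket L ε (fun t => (m t : ℤ) + dlt ((r : ℕ) - 1) t - dlt (r : ℕ) t) := by
  rw [kn_eq h]
  exact mkEnd_single _ _

lemma kB_kn {m : Fin n → ℕ} (h : Ok ε m) (s : ℤ) (r : Fin (n + 1)) :
    kB q pc ι ε s r (kn L ε m) =
      ι ((if (r : ℕ) = 0 then pc⁻¹ * qc q ε 0 ^ (av m 0 : ℤ)
        else if (r : ℕ) = n then pc * qc q ε (n - 1) ^ (-(av m (n - 1) : ℤ))
        else qc q ε ((r : ℕ) - 1) ^ (-(av m ((r : ℕ) - 1) : ℤ)) *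
          qc q ε (r : ℕ) ^ (av m (r : ℕ) : ℤ)) ^ s) • kn L ε m := by
  rw [kn_eq h]
  exact mkEnd_single _ _

variable (hε : ∀ t : Fin n, (t : ℕ) = n - 1 → ε t = false)
  (hq0 : q ≠ 0) (hq : ∀ k : ℕ, k ≠ 0 → q ^ k ≠ 1) (hn : 2 ≤ n)

include hε

lemma eB_zero_bas (a : ℕ) :
    eB q ι ε x (mfin 0) (kn L ε (bas n a)) = x • kn L ε (basj n a 0) := by
  rw [eB_kn q ι x (ok_bas hε a), mfin_val (Nat.zero_le _), if_pos rfl]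
  congr 2; funext u; simp only [bas, basj, dlt]; split_ifs <;> simp

lemma eB_bas {r : ℕ} (h1 : 1 ≤ r) (h2 : r ≤ n - 1) (a : ℕ) :
    eB q ι ε x (mfin r) (kn L ε (bas n a)) = 0 := by
  rw [eB_kn q ι x (ok_bas hε a), mfin_val (by omega), if_neg (by omega), if_neg (by omega),
    av_bas (by omega), if_neg (by omega), qnum_zero]
  simp

include hq0 hq in
lemma eB_basj {r : ℕ} (h1 : 1 ≤ r) (h2 : r ≤ n - 1) (a : ℕ) :
    eB q ι ε x (mfin r) (kn L ε (basj n a (r - 1))) = (1 : L) • kn L ε (basj n a r) := by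
  rw [eB_kn q ι x (ok_basj hε a _), mfin_val (by omega), if_neg (by omega), if_neg (by omega),
    av_basj (by omega), if_neg (by omega), if_pos rfl, qnum_one hq0 hq, map_one]
  congr 2; funext u; simp only [basj, dlt]; split_ifs <;> simp

include hn in
lemma kB_zero_bas (s : ℤ) (a : ℕ) :
    kB q pc ι ε s (mfin 0) (kn L ε (bas n a)) = ι (pc⁻¹ ^ s) • kn L ε (bas n a) := by
  rw [kB_kn q pc ι (ok_bas hε a), mfin_val (by omega), if_pos rfl, av_bas (by omega),
    if_neg (by omega)]
  simp

lemma kB_bas (s : ℤ) {r : ℕ} (h1 : 1 ≤ r) (h2 : r ≤ n - 1) (a : ℕ) :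
    kB q pc ι ε s (mfin r) (kn L ε (bas n a)) =
      ι ((if r = n - 1 then q ^ a else 1) ^ s) • kn L ε (bas n a) := by
  rw [kB_kn q pc ι (ok_bas hε a), mfin_val (by omega), if_neg (by omega), if_neg (by omega),
    av_bas (by omega), if_neg (by omega), av_bas (by omega)]
  by_cases h : r = n - 1
  · subst h; simp [qc_last q hε]
  · simp [h]

include hn in
lemma kB_last_bas (a : ℕ) :
    kB q pc ι ε (-1) (Fin.last n) (kn L ε (bas n a)) =
      ι (pc⁻¹ * q ^ a) • kn L ε (bas n a) := by
  rw [kB_kn q pc ι (ok_bas hε a), Fin.val_last, if_neg (by omega), if_pos rfl,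
    av_bas (by omega), if_pos rfl, qc_last q hε]
  simp [mul_comm]

include hn in
lemma fB_last_bas (a : ℕ) :
    fB q ι ε x (Fin.last n) (kn L ε (bas n a)) = (1 : L) • kn L ε (bas n (a + 1)) := by
  rw [fB_kn q ι x (ok_bas hε a), Fin.val_last, if_neg (by omega), if_pos rfl, one_smul]
  unfold kn
  congr 1; funext u; simp only [bas, dlt]; split_ifs <;> simp

include hn in
lemma fB_zero_bas (a : ℕ) :
    fB q ι ε x (mfin 0) (kn L ε (bas n a)) = 0 := by
  rw [fB_kn q ι x (ok_bas hε a), mfin_val (by omega), if_pos rfl, av_bas (by omega),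
    if_neg (by omega), qnum_zero]
  simp

include hn hq0 hq in
lemma fB_zero_basj (a : ℕ) :
    fB q ι ε x (mfin 0) (kn L ε (basj n a 0)) = x⁻¹ • kn L ε (bas n a) := by
  rw [fB_kn q ι x (ok_basj hε a _), mfin_val (by omega), if_pos rfl, av_basj (by omega),
    if_neg (by omega), if_pos rfl, zero_add, qnum_one hq0 hq, map_one, mul_one]
  congr 2; funext u; simp only [bas, basj, dlt]; split_ifs <;> simp

lemma fB_bas {r : ℕ} (h1 : 1 ≤ r) (h2 : r < n - 1) (a : ℕ) :
    fB q ι ε x (mfin r) (kn L ε (bas n a)) = 0 := by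
  rw [fB_kn q ι x (ok_bas hε a), mfin_val (by omega), if_neg (by omega), if_neg (by omega),
    av_bas (by omega), if_neg (by omega), qnum_zero]
  simp

include hq0 hq in
lemma fB_basj {r : ℕ} (h1 : 1 ≤ r) (h2 : r < n - 1) (a : ℕ) :
    fB q ι ε x (mfin r) (kn L ε (basj n a r)) = (1 : L) • kn L ε (basj n a (r - 1)) := by
  rw [fB_kn q ι x (ok_basj hε a _), mfin_val (by omega), if_neg (by omega), if_neg (by omega),
    av_basj (by omega), if_neg (by omega), if_pos rfl, zero_add, qnum_one hq0 hq, map_one]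
  congr 2; funext u; simp only [basj, dlt]; split_ifs <;> simp

include hn in
/-- For `a = 0` both sides vanish because `[0] = 0`, so the truncated `a - 1` is harmless. -/
lemma fB_pred_bas (a : ℕ) :
    fB q ι ε x (mfin (n - 1)) (kn L ε (bas n a)) =
      ι (qnum q a) • kn L ε (basj n (a - 1) (n - 2)) := by
  rw [fB_kn q ι x (ok_bas hε a), mfin_val (by omega), if_neg (by omega), if_neg (by omega),
    av_bas (by omega), if_pos rfl]
  cases a with
  | zero => simp [qnum_zero]
  | succ a =>
    congr 2; funext u; simp only [bas, basj, dlt]; split_ifs <;> omega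

/-! ### The composed operators on `|a·e_n⟩ ⊗ |b·e_n⟩` -/

variable (y : L)

omit hε in
lemma id_kn (m : Fin n → ℕ) :
    (LinearMap.id : W L ε →ₗ[L] W L ε) (kn L ε m) = (1 : L) • kn L ε m := by simp

include hq0 hq hn in
/-- The raised unit travels from position `1` to position `r + 1`, in either factor. -/
lemma appE_aux (a b r : ℕ) (hr : r ≤ n - 1) :
    appList ((List.range (r + 1)).reverse.map fun p => dEB q pc ι ε x y (mfin p))
        (kkn L ε (bas n a) (bas n b)) =
      y • kkn L ε (bas n a) (basj n b r) +
        (x * ι pc⁻¹ * ι (if r = n - 1 then q ^ b else 1)) •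
          kkn L ε (basj n a r) (bas n b) := by
  have ob := ok_bas hε
  have obj := ok_basj hε
  induction r with
  | zero =>
    have : ¬ (0 = n - 1) := by omega
    simp only [zero_add, List.range_one, List.reverse_singleton, List.map_cons, List.map_nil,
      appList, List.foldr, dEB, LinearMap.add_apply, this, if_false, map_one, mul_one]
    rw [opT_smul (ob a) (ob b) (ob a) (obj b 0) (id_kn _) (eB_zero_bas q ι y hε b),
      opT_smul (ob a) (ob b) (obj a 0) (ob b) (eB_zero_bas q ι x hε a)
        (kB_zero_bas q pc ι hε hn 1 b)]
    simp
  | succ r ih =>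
    have hr' : ¬ (r = n - 1) := by omega
    rw [List.range_succ, List.reverse_append]
    simp only [List.reverse_singleton, List.map_append, List.map_cons, List.map_nil]
    have ih := ih (by omega)
    simp only [appList] at ih ⊢
    simp only [List.singleton_append, List.foldr_cons]
    rw [ih, map_add, map_smul, map_smul]
    simp only [dEB, LinearMap.add_apply]
    have e1 := eB_basj q ι y hε hq0 hq (r := r + 1) (by omega) hr b
    have e2 := eB_basj q ι x hε hq0 hq (r := r + 1) (by omega) hr a
    have z1 := eB_bas q ι y hε (r := r + 1) (by omega) hr b
    have z2 := eB_bas q ι x hε (r := r + 1) (by omega) hr a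
    have k1 := kB_bas q pc ι hε 1 (r := r + 1) (by omega) hr b
    simp only [Nat.add_sub_cancel] at e1 e2
    rw [opT_smul (ob a) (obj b r) (ob a) (obj b (r + 1)) (id_kn _) e1,
      opT_left_zero (ob a) (obj b r) z2, opT_right_zero (obj a r) (ob b) z1,
      opT_smul (obj a r) (ob b) (obj a (r + 1)) (ob b) e2 k1]
    simp [hr', smul_smul]

include hq0 hq hn in
/-- The composition `Δ(e_{n-1}) ⋯ Δ(e_0)` on `|a·e_n⟩ ⊗ |b·e_n⟩`. -/
lemma appE (a b : ℕ) :
    appList ((List.range n).reverse.map fun p => dEB q pc ι ε x y (mfin p))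
        (kkn L ε (bas n a) (bas n b)) =
      y • kkn L ε (bas n a) (bas n (b + 1)) +
        (x * ι pc⁻¹ * ι q ^ b) • kkn L ε (bas n (a + 1)) (bas n b) := by
  have := appE_aux q pc ι x hε hq0 hq hn y a b (n - 1) le_rfl
  rw [Nat.sub_add_cancel (by omega)] at this
  rw [this, basj_last, basj_last, if_pos rfl, map_pow]

include hq0 hq hn in
/-- The lowered unit travels back from position `r + 1` to position `1` and is removed. -/
lemma appF_aux (a b r : ℕ) (hr : r < n - 1) :
    appList ((List.range (r + 1)).map fun p => dFB q pc ι ε x y (mfin p))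
        (kkn L ε (basj n a r) (bas n b)) = x⁻¹ • kkn L ε (bas n a) (bas n b) ∧
    appList ((List.range (r + 1)).map fun p => dFB q pc ι ε x y (mfin p))
        (kkn L ε (bas n a) (basj n b r)) = (ι pc * y⁻¹) • kkn L ε (bas n a) (bas n b) := by
  have ob := ok_bas hε
  have obj := ok_basj hε
  induction r with
  | zero =>
    simp only [zero_add, List.range_one, List.map_cons, List.map_nil,
      appList, List.foldr, dFB, LinearMap.add_apply]
    rw [opT_smul (obj a 0) (ob b) (ob a) (ob b) (fB_zero_basj q ι x hε hq0 hq hn a) (id_kn _),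
      opT_right_zero (obj a 0) (ob b) (fB_zero_bas q ι y hε hn b),
      opT_left_zero (ob a) (obj b 0) (fB_zero_bas q ι x hε hn a),
      opT_smul (ob a) (obj b 0) (ob a) (ob b) (kB_zero_bas q pc ι hε hn (-1) a)
        (fB_zero_basj q ι y hε hq0 hq hn b)]
    simp
  | succ r ih =>
    have hr' : ¬ (r + 1 = n - 1) := by omega
    rw [List.range_succ]
    simp only [List.map_append, List.map_cons, List.map_nil]
    obtain ⟨ih1, ih2⟩ := ih (by omega)
    simp only [appList] at ih1 ih2 ⊢
    simp only [List.foldr_append, List.foldr_cons, List.foldr_nil]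
    simp only [dFB, LinearMap.add_apply] at ih1 ih2 ⊢
    have e1 := fB_basj q ι y hε hq0 hq (r := r + 1) (by omega) hr b
    have e2 := fB_basj q ι x hε hq0 hq (r := r + 1) (by omega) hr a
    have z1 := fB_bas q ι y hε (r := r + 1) (by omega) hr b
    have z2 := fB_bas q ι x hε (r := r + 1) (by omega) hr a
    have k1 := kB_bas q pc ι hε (-1) (r := r + 1) (by omega) hr.le a
    simp only [Nat.add_sub_cancel] at e1 e2
    rw [opT_smul (obj a (r + 1)) (ob b) (obj a r) (ob b) e2 (id_kn _),
      opT_right_zero (obj a (r + 1)) (ob b) z1, opT_left_zero (ob a) (obj b (r + 1)) z2,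
      opT_smul (ob a) (obj b (r + 1)) (ob a) (obj b r) k1 e1]
    simp [hr', ih1, ih2]

omit hε in
/-- `appList` as a linear map. -/
def appL (ops : List (WW L ε →ₗ[L] WW L ε)) : WW L ε →ₗ[L] WW L ε :=
  ops.foldr (fun A B => A ∘ₗ B) LinearMap.id

omit hε in
lemma appList_eq (ops : List (WW L ε →ₗ[L] WW L ε)) (v : WW L ε) :
    appList ops v = appL ops v := by
  induction ops with
  | nil => rfl
  | cons A t ih => simpa [appList, appL] using congrArg A ih

include hq0 hq hn in
/-- The composition `Δ(f_0) ⋯ Δ(f_{n-1})` on `|a·e_n⟩ ⊗ |b·e_n⟩`; the terms with a truncated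
subtraction carry the factor `[0] = 0`. -/
lemma appF (a b : ℕ) :
    appList ((List.range n).map fun p => dFB q pc ι ε x y (mfin p))
        (kkn L ε (bas n a) (bas n b)) =
      (x⁻¹ * ι (qnum q a)) • kkn L ε (bas n (a - 1)) (bas n b) +
        (ι pc * y⁻¹ * ι (q ^ a)⁻¹ * ι (qnum q b)) • kkn L ε (bas n a) (bas n (b - 1)) := by
  have ob := ok_bas hε
  have obj := ok_basj hε
  obtain ⟨k, rfl⟩ : ∃ k, n = k + 2 := ⟨n - 2, by omega⟩
  rw [List.range_succ, List.map_append]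
  have h1 := (appF_aux q pc ι x hε hq0 hq hn y (a - 1) b k (by omega)).1
  have h2 := (appF_aux q pc ι x hε hq0 hq hn y a (b - 1) k (by omega)).2
  have s1 : dFB q pc ι ε x y (mfin (k + 1)) (kkn L ε (bas (k + 2) a) (bas (k + 2) b)) =
      ι (qnum q a) • kkn L ε (basj (k + 2) (a - 1) k) (bas (k + 2) b) +
      (ι (q ^ a)⁻¹ * ι (qnum q b)) • kkn L ε (bas (k + 2) a) (basj (k + 2) (b - 1) k) := by
    have k1 := kB_bas q pc ι hε (-1) (r := k + 1) (by omega) (by omega) a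
    have e1 : fB q ι ε x (mfin (k + 1)) (kn L ε (bas (k + 2) a)) =
      ι (qnum q a) • kn L ε (basj (k + 2) (a - 1) k) := fB_pred_bas q ι x hε hn a
    have e2 : fB q ι ε y (mfin (k + 1)) (kn L ε (bas (k + 2) b)) =
      ι (qnum q b) • kn L ε (basj (k + 2) (b - 1) k) := fB_pred_bas q ι y hε hn b
    simp only [dFB, LinearMap.add_apply]
    rw [opT_smul (ob a) (ob b) (obj (a - 1) k) (ob b) e1 (id_kn _),
      opT_smul (ob a) (ob b) (ob a) (obj (b - 1) k) k1 e2]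
    simp
  rw [appList_eq] at h1 h2
  have : ∀ (ops : List (WW L ε →ₗ[L] WW L ε)) (A : WW L ε →ₗ[L] WW L ε) (v : WW L ε),
      appList (ops ++ [A]) v = appL ops (A v) := by
    intro ops A v
    rw [← appList_eq]; simp [appList]
  rw [List.map_singleton, this, s1, map_add, map_smul, map_smul, h1, h2, smul_smul, smul_smul]
  congr 2 <;> ring

include hn in
lemma dFB_last (a b : ℕ) :
    dFB q pc ι ε x y (Fin.last n) (kkn L ε (bas n a) (bas n b)) =
      kkn L ε (bas n (a + 1)) (bas n b) +
        (ι pc⁻¹ * ι q ^ a) • kkn L ε (bas n a) (bas n (b + 1)) := by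
  have ob := ok_bas hε
  simp only [dFB, LinearMap.add_apply]
  rw [opT_smul (ob a) (ob b) (ob (a + 1)) (ob b) (fB_last_bas q ι x hε hn a) (id_kn _),
    opT_smul (ob a) (ob b) (ob a) (ob (b + 1)) (kB_last_bas q pc ι hε hn a)
      (fB_last_bas q ι y hε hn b)]
  simp

end Aux

/-! ### Recursions for the coefficients of `ξ_l` -/

lemma qnum_ne {q : ℂ} (hq0 : q ≠ 0) (hq : ∀ k : ℕ, k ≠ 0 → q ^ k ≠ 1) (m : ℕ) :
    qnum q (m + 1) ≠ 0 := by
  refine div_ne_zero (fun h => hq (2 * (m + 1)) (by omega) ?_) (sub_inv_ne hq0 hq)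
  rw [sub_eq_zero, inv_pow] at h
  rw [two_mul, pow_add]
  nth_rewrite 1 [h]
  exact inv_mul_cancel₀ (pow_ne_zero _ hq0)

lemma qfac_succ (q : ℂ) (m : ℕ) : qfac q (m + 1) = qfac q m * qnum q (m + 1) := by
  simp [qfac, Finset.prod_range_succ]

lemma qfac_ne {q : ℂ} (hq0 : q ≠ 0) (hq : ∀ k : ℕ, k ≠ 0 → q ^ k ≠ 1) (m : ℕ) :
    qfac q m ≠ 0 :=
  Finset.prod_ne_zero_iff.2 fun k _ => qnum_ne hq0 hq k

lemma qbin_gt (q : ℂ) {l m : ℕ} (h : l < m) : qbin q l m = 0 := by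
  simp [qbin, Nat.not_le.2 h]

lemma qbin_add (q : ℂ) (m d : ℕ) :
    qbin q (m + d) m = qfac q (m + d) / (qfac q m * qfac q d) := by
  simp [qbin]

lemma qbin_zero {q : ℂ} (hq0 : q ≠ 0) (hq : ∀ k : ℕ, k ≠ 0 → q ^ k ≠ 1) (l : ℕ) :
    qbin q l 0 = 1 := by
  have := qfac_ne hq0 hq l
  simp [qbin, qfac] at this ⊢
  exact this

lemma qbin_self {q : ℂ} (hq0 : q ≠ 0) (hq : ∀ k : ℕ, k ≠ 0 → q ^ k ≠ 1) (l : ℕ) :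
    qbin q l l = 1 := by
  have := qfac_ne hq0 hq l
  simp [qbin, qfac] at this ⊢
  exact this

/-- A Pascal rule for `[l choose m]` holds with weights `u`, `v` as soon as it does so at the level
of `q`-numbers; the two choices of weights below give the two `q`-Pascal rules. -/
lemma qbin_pascal_aux {q : ℂ} (hq0 : q ≠ 0) (hq : ∀ k : ℕ, k ≠ 0 → q ^ k ≠ 1) (m d : ℕ)
    (u v : ℂ) (h : qnum q (m + d + 2) = u * qnum q (d + 1) + v * qnum q (m + 1)) :
    qbin q (m + d + 2) (m + 1) = u * qbin q (m + d + 1) (m + 1) + v * qbin q (m + d + 1) m := by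
  have e1 := qbin_add q (m + 1) (d + 1)
  have e2 := qbin_add q (m + 1) d
  have e3 := qbin_add q m (d + 1)
  rw [show m + 1 + (d + 1) = m + d + 2 by ring] at e1
  rw [show m + 1 + d = m + d + 1 by ring] at e2
  rw [show m + (d + 1) = m + d + 1 by ring] at e3
  have a1 := qfac_succ q (m + d + 1)
  rw [show m + d + 1 + 1 = m + d + 2 by ring] at a1
  rw [e1, e2, e3, a1, qfac_succ q m, qfac_succ q d, h]
  have := qfac_ne hq0 hq m
  have := qfac_ne hq0 hq d
  have := qnum_ne hq0 hq m
  have := qnum_ne hq0 hq d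
  field_simp

lemma qbin_pascal₁ {q : ℂ} (hq0 : q ≠ 0) (hq : ∀ k : ℕ, k ≠ 0 → q ^ k ≠ 1) (l m : ℕ) :
    qbin q (l + 1) (m + 1) =
      (q ^ (m + 1))⁻¹ * qbin q l (m + 1) + q ^ l / q ^ m * qbin q l m := by
  rcases lt_trichotomy l m with h | h | h
  · simp [qbin_gt q h, qbin_gt q (show l < m + 1 by omega),
      qbin_gt q (show l + 1 < m + 1 by omega)]
  · subst h
    simp [qbin_self hq0 hq, qbin_gt q (Nat.lt_succ_self l), div_self (pow_ne_zero l hq0)]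
  · obtain ⟨d, rfl⟩ := Nat.exists_eq_add_of_lt h
    refine qbin_pascal_aux hq0 hq m d _ _ ?_
    have := sub_inv_ne hq0 hq
    simp only [qnum, inv_pow]
    field_simp
    ring

lemma qbin_pascal₂ {q : ℂ} (hq0 : q ≠ 0) (hq : ∀ k : ℕ, k ≠ 0 → q ^ k ≠ 1) (l m : ℕ) :
    qbin q (l + 1) (m + 1) =
      q ^ (m + 1) * qbin q l (m + 1) + q ^ m / q ^ l * qbin q l m := by
  rcases lt_trichotomy l m with h | h | h
  · simp [qbin_gt q h, qbin_gt q (show l < m + 1 by omega),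
      qbin_gt q (show l + 1 < m + 1 by omega)]
  · subst h
    simp [qbin_self hq0 hq, qbin_gt q (Nat.lt_succ_self l), div_self (pow_ne_zero l hq0)]
  · obtain ⟨d, rfl⟩ := Nat.exists_eq_add_of_lt h
    refine qbin_pascal_aux hq0 hq m d _ _ ?_
    have := sub_inv_ne hq0 hq
    simp only [qnum, inv_pow]
    field_simp
    ring

/-- The coefficient `s^m q^{ml - m(m+1)/2} [l choose m]` of `|m·e_n⟩ ⊗ |(l-m)·e_n⟩` in `ξ_l`,
where `s = (-p)⁻¹`. -/
def cf (q s : ℂ) (l m : ℕ) : ℂ :=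
  s ^ m * q ^ (m * l) * (q ^ (m * (m + 1) / 2))⁻¹ * qbin q l m

/-- The sequence `f` moved one place to the right, with `0` in front. -/
def sh {M : Type} [Zero M] (f : ℕ → M) : ℕ → M
  | 0 => 0
  | m + 1 => f m

lemma sh_zero {M : Type} [Zero M] (f : ℕ → M) : sh f 0 = 0 := rfl

lemma sh_succ {M : Type} [Zero M] (f : ℕ → M) (m : ℕ) : sh f (m + 1) = f m := rfl

lemma tri_succ (m : ℕ) : (m + 1) * (m + 1 + 1) / 2 = m * (m + 1) / 2 + (m + 1) := by
  rw [show (m + 1) * (m + 1 + 1) = m * (m + 1) + (m + 1) * 2 by ring,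
    Nat.add_mul_div_right _ _ (by norm_num)]

lemma cf_gt (q s : ℂ) {l m : ℕ} (h : l < m) : cf q s l m = 0 := by
  simp [cf, qbin_gt q h]

lemma cf_zero {q : ℂ} (s : ℂ) (hq0 : q ≠ 0) (hq : ∀ k : ℕ, k ≠ 0 → q ^ k ≠ 1) (l : ℕ) :
    cf q s l 0 = 1 := by
  simp [cf, qbin_zero hq0 hq]

/-- Equivalent to `qbin_pascal₁`; the exponent of `q` in front of `c_{l,m-1}` is `2l + 1 - m`. -/
lemma cf_pascal₁ {q : ℂ} (s : ℂ) (hq0 : q ≠ 0) (hq : ∀ k : ℕ, k ≠ 0 → q ^ k ≠ 1) (l m : ℕ) :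
    cf q s (l + 1) m = cf q s l m + s * q ^ (2 * l + 1) / q ^ m * sh (cf q s l) m := by
  cases m with
  | zero => simp [cf_zero s hq0 hq, sh]
  | succ m =>
    simp only [sh, cf, tri_succ, qbin_pascal₁ hq0 hq l m]
    field_simp
    ring

/-- Equivalent to `qbin_pascal₂`; the exponent of `q` in front of `c_{l,m-1}` is `m - 1`. -/
lemma cf_pascal₂ {q : ℂ} (s : ℂ) (hq0 : q ≠ 0) (hq : ∀ k : ℕ, k ≠ 0 → q ^ k ≠ 1) (l m : ℕ) :
    cf q s (l + 1) m = q ^ (2 * m) * cf q s l m + s * q ^ m / q * sh (cf q s l) m := by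
  cases m with
  | zero => simp [cf_zero s hq0 hq, sh]
  | succ m =>
    simp only [sh, cf, tri_succ, qbin_pascal₂ hq0 hq l m]
    field_simp
    ring

/-- The contribution of the first tensor factor to the lowering recursion. -/
lemma cf_lower₁ {q : ℂ} (s : ℂ) (hq0 : q ≠ 0) (hq : ∀ k : ℕ, k ≠ 0 → q ^ k ≠ 1) {k m : ℕ}
    (h : m ≤ k) :
    qnum q (m + 1) * cf q s (k + 1) (m + 1) = s * q ^ k * qnum q (k + 1) * cf q s k m := by
  obtain ⟨d, rfl⟩ := Nat.exists_eq_add_of_le h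
  have e1 := qbin_add q (m + 1) d
  rw [show m + 1 + d = m + d + 1 by ring] at e1
  rw [cf, cf, e1, qbin_add, qfac_succ q m, qfac_succ q (m + d), tri_succ]
  have := qfac_ne hq0 hq m
  have := qfac_ne hq0 hq d
  have := qnum_ne hq0 hq m
  field_simp
  ring

/-- The contribution of the second tensor factor to the lowering recursion. -/
lemma cf_lower₂ {q : ℂ} (s : ℂ) (hq0 : q ≠ 0) (hq : ∀ k : ℕ, k ≠ 0 → q ^ k ≠ 1) {k m : ℕ}
    (h : m ≤ k) :
    (q ^ m)⁻¹ * qnum q (k + 1 - m) * cf q s (k + 1) m = qnum q (k + 1) * cf q s k m := by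
  obtain ⟨d, rfl⟩ := Nat.exists_eq_add_of_le h
  have e1 := qbin_add q m (d + 1)
  rw [show m + (d + 1) = m + d + 1 by ring] at e1
  rw [cf, cf, e1, qbin_add, qfac_succ q d, qfac_succ q (m + d),
    show m + d + 1 - m = d + 1 by omega]
  have := qfac_ne hq0 hq m
  have := qfac_ne hq0 hq d
  have := qnum_ne hq0 hq d
  field_simp
  ring

/-! ### Coefficient identities behind the raising recursion -/

section Coeff

variable {L : Type} [Field L] {Q S : L} {C : ℕ → ℕ → L}

/-- The coefficients of `Δ(f_n)² ξ_k`, expressed through those of `ξ_{k+1}`. -/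
lemma coeff_ff (hQ : Q ≠ 0) (hS : S ^ 2 = -Q)
    (P2 : ∀ l m, C (l + 1) m = Q ^ (2 * m) * C l m + S * Q ^ m / Q * sh (C l) m) (k m : ℕ) :
    -S * Q ^ m * (-S * Q ^ m * C k m + sh (C k) m) +
        sh (fun j => -S * Q ^ j * C k j + sh (C k) j) m =
      -Q * C (k + 1) m - S * Q / Q ^ m * sh (C (k + 1)) m := by
  cases m with
  | zero =>
    have h := P2 k 0
    rw [sh_zero] at h
    rw [sh_zero, sh_zero, sh_zero]
    rw [h]
    simp only [pow_zero]
    linear_combination C k 0 * hS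
  | succ m =>
    simp only [sh_succ]
    rw [P2 k (m + 1), P2 k m, sh_succ]
    -- The defect is a multiple of `S ^ 2 + Q`, the only relation between `S` and `Q`.
    linear_combination (norm := (field_simp; ring))
      (C k (m + 1) * Q ^ (2 * m + 2) + Q⁻¹ * sh (C k) m) * hS

/-- The coefficientwise form of the raising recursion. -/
lemma coeff_raise (hQ : Q ≠ 0) (hS : S ^ 2 = -Q)
    (P1 : ∀ l m, C (l + 1) m = C l m + S * Q ^ (2 * l + 1) / Q ^ m * sh (C l) m)
    (P2 : ∀ l m, C (l + 1) m = Q ^ (2 * m) * C l m + S * Q ^ m / Q * sh (C l) m)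
    (x y : L) (k : ℕ) (h1 : 1 - Q ^ (2 * (k + 1) + 1) ≠ 0) {m : ℕ} (hm : m ≤ k + 2) :
    y * C (k + 1) m + sh (fun j => x * -S * Q ^ (k + 1 - j) * C (k + 1) j) m =
      (1 - Q ^ (2 * (k + 1) + 1))⁻¹ *
        ((Q ^ (k + 1 + 1) * x + y) * C (k + 1 + 1) m +
          Q ^ (k + 1) * (x + Q ^ (k + 1) * y) *
            (-S * Q ^ m * (-S * Q ^ m * C k m + sh (C k) m) +
              sh (fun j => -S * Q ^ j * C k j + sh (C k) j) m)) := by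
  rw [coeff_ff hQ hS P2, P1 (k + 1) m, eq_inv_mul_iff_mul_eq₀ h1]
  cases m with
  | zero => simp only [sh]; ring
  | succ m =>
    simp only [sh]
    obtain ⟨d, hd⟩ := Nat.exists_eq_add_of_le (show m ≤ k + 1 by omega)
    rw [hd, Nat.add_sub_cancel_left]
    field_simp
    ring

end Coeff

/-! ### Weight vectors supported on the last position -/

section Phi

variable {L : Type} [Field L] {n : ℕ} {ε : Fin n → Bool}

/-- The vector `Σ_{m ≤ N} f(m) |m·e_n⟩ ⊗ |(N-m)·e_n⟩`. -/
def Phi (ε : Fin n → Bool) (N : ℕ) (f : ℕ → L) : WW L ε :=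
  ∑ m ∈ Finset.range (N + 1), f m • kkn L ε (bas n m) (bas n (N - m))

lemma Phi_congr {N : ℕ} {f g : ℕ → L} (h : ∀ m ≤ N, f m = g m) : Phi ε N f = Phi ε N g :=
  Finset.sum_congr rfl fun m hm => by
    rw [h m (Nat.lt_succ_iff.1 (Finset.mem_range.1 hm))]

lemma Phi_add (N : ℕ) (f g : ℕ → L) : Phi ε N f + Phi ε N g = Phi ε N fun m => f m + g m := by
  simp only [Phi, ← Finset.sum_add_distrib, add_smul]

lemma Phi_sub (N : ℕ) (f g : ℕ → L) : Phi ε N f - Phi ε N g = Phi ε N fun m => f m - g m := by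
  simp only [Phi, ← Finset.sum_sub_distrib, sub_smul]

lemma Phi_smul (N : ℕ) (c : L) (f : ℕ → L) : c • Phi ε N f = Phi ε N fun m => c * f m := by
  simp only [Phi, Finset.smul_sum, smul_smul]

/-- The extension of `f` by zero beyond `N` lets the two shifted sums share the range `m ≤ N + 1`. -/
lemma Phi_raise (A : WW L ε →ₗ[L] WW L ε) (α β : ℕ → ℕ → L)
    (hA : ∀ a b, A (kkn L ε (bas n a) (bas n b)) =
      α a b • kkn L ε (bas n a) (bas n (b + 1)) + β a b • kkn L ε (bas n (a + 1)) (bas n b))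
    (N : ℕ) (f : ℕ → L) (hf : ∀ m, N < m → f m = 0) :
    A (Phi ε N f) =
      Phi ε (N + 1) fun m => α m (N - m) * f m + sh (fun j => β j (N - j) * f j) m := by
  rw [← Phi_add]
  simp only [Phi, map_sum, map_smul, hA, smul_add, smul_smul, Finset.sum_add_distrib]
  congr 1
  · rw [Finset.sum_range_succ _ (N + 1), hf (N + 1) (Nat.lt_succ_self N), mul_zero, zero_smul,
      add_zero]
    refine Finset.sum_congr rfl fun m hm => ?_
    have := Finset.mem_range.1 hm
    rw [show N + 1 - m = N - m + 1 by omega, mul_comm]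
  · rw [Finset.sum_range_succ' _ (N + 1)]
    simp only [sh, zero_smul, add_zero]
    refine Finset.sum_congr rfl fun m hm => ?_
    rw [show N + 1 - (m + 1) = N - m by omega, mul_comm]

/-- The hypotheses `hα`, `hβ` remove the terms with a truncated `0 - 1`. -/
lemma Phi_lower (A : WW L ε →ₗ[L] WW L ε) (α β : ℕ → ℕ → L)
    (hA : ∀ a b, A (kkn L ε (bas n a) (bas n b)) =
      α a b • kkn L ε (bas n (a - 1)) (bas n b) + β a b • kkn L ε (bas n a) (bas n (b - 1)))
    (hα : ∀ b, α 0 b = 0) (hβ : ∀ a, β a 0 = 0) (k : ℕ) (f : ℕ → L) :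
    A (Phi ε (k + 1) f) =
      Phi ε k fun m => α (m + 1) (k - m) * f (m + 1) + β m (k + 1 - m) * f m := by
  rw [← Phi_add]
  simp only [Phi, map_sum, map_smul, hA, smul_add, smul_smul, Finset.sum_add_distrib]
  congr 1
  · rw [Finset.sum_range_succ' _ (k + 1)]
    simp only [hα, mul_zero, zero_smul, add_zero]
    refine Finset.sum_congr rfl fun m hm => ?_
    rw [show k + 1 - (m + 1) = k - m by omega, mul_comm, Nat.add_sub_cancel]
  · rw [Finset.sum_range_succ _ (k + 1), Nat.sub_self, hβ, mul_zero, zero_smul, add_zero]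
    refine Finset.sum_congr rfl fun m hm => ?_
    have := Finset.mem_range.1 hm
    rw [show k + 1 - m - 1 = k - m by omega, mul_comm]

/-- For `m ≤ l` the integer exponents and entries in the definition of `ξ_l` reduce to natural
numbers, up to inverses. -/
lemma xiB_eq (q pc : ℂ) (hq0 : q ≠ 0) (ι : ℂ →+* L) (l : ℕ) :
    xiB q pc ι ε l = Phi ε l fun m => ι (cf q (-pc)⁻¹ l m) := by
  refine Finset.sum_congr rfl fun m hm => ?_
  have hml : m ≤ l := Nat.lt_succ_iff.1 (Finset.mem_range.1 hm)
  congr 1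
  · congr 1
    rw [cf, zpow_sub₀ hq0, ← Nat.cast_mul, zpow_neg, zpow_natCast, zpow_natCast, zpow_natCast,
      inv_pow, div_eq_mul_inv]
    ring
  · unfold kkn
    congr 1 <;> funext u <;> simp only [bas] <;> split_ifs <;> simp [Nat.cast_sub hml]

end Phi

/-- recursion among the type-B singular vectors `ξ_l`. -/
theorem statement_17 (q qh : ℂ) (hq0 : q ≠ 0) (hqh : qh ^ 2 = q)
    (hq : ∀ k : ℕ, k ≠ 0 → q ^ k ≠ 1)
    {L : Type} [Field L] (ι : ℂ →+* L) (x y : L) (hx : x ≠ 0) (hy : y ≠ 0)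
    (n κ : ℕ) [NeZero n] (hn : 2 ≤ n) (hκ1 : 1 ≤ κ) (hκ2 : κ ≤ n - 1)
    (ε : Fin n → Bool) (hε : ε = fun t : Fin n => decide ((t : ℕ) < κ)) (l : ℕ) :
    (1 ≤ l →
      appList ((List.range n).reverse.map
            fun p => dEB q (Complex.I * qh⁻¹) ι ε x y (mfin p))
          (xiB q (Complex.I * qh⁻¹) ι ε l)
        = (ι (1 - q ^ (2 * l + 1)))⁻¹ •
            ((ι (q ^ (l + 1)) * x + y) • xiB q (Complex.I * qh⁻¹) ι ε (l + 1) +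
              (ι (q ^ l) * (x + ι (q ^ l) * y)) •
                dFB q (Complex.I * qh⁻¹) ι ε x y (Fin.last n)
                  (dFB q (Complex.I * qh⁻¹) ι ε x y (Fin.last n)
                    (xiB q (Complex.I * qh⁻¹) ι ε (l - 1)))) ∧
      appList ((List.range n).map fun p => dFB q (Complex.I * qh⁻¹) ι ε x y (mfin p))
          (xiB q (Complex.I * qh⁻¹) ι ε l)
        = (ι (Complex.I * qnum q l * qh⁻¹) * (ι (q ^ l) * x⁻¹ + y⁻¹)) •
            xiB q (Complex.I * qh⁻¹) ι ε (l - 1)) ∧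
    appList ((List.range n).reverse.map
          fun p => dEB q (Complex.I * qh⁻¹) ι ε x y (mfin p))
        (xiB q (Complex.I * qh⁻¹) ι ε 0)
      = (ι (1 - q))⁻¹ •
          ((ι q * x + y) • xiB q (Complex.I * qh⁻¹) ι ε 1 -
            (ι (Complex.I * qh) * (x + y)) •
              dFB q (Complex.I * qh⁻¹) ι ε x y (Fin.last n)
                (xiB q (Complex.I * qh⁻¹) ι ε 0)) := by
  set pc : ℂ := Complex.I * qh⁻¹ with hpc
  have hqh0 : qh ≠ 0 := by rintro rfl; apply hq0; rw [← hqh]; norm_num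
  have hε' : ∀ t : Fin n, (t : ℕ) = n - 1 → ε t = false := by
    intro t ht; subst hε; simp; omega
  have hpq : pc ^ 2 * q = -1 := by
    rw [hpc, ← hqh, mul_pow, Complex.I_sq]; field_simp
  have hpc0 : pc ≠ 0 := by intro h; rw [h] at hpq; norm_num at hpq
  -- The scalar `s = (-p)⁻¹` of `cf`; since `p² = -q⁻¹`, one has `s = pq` and `s² = -q`.
  set s : ℂ := (-pc)⁻¹ with hs
  have hsp : s = pc * q := by
    refine inv_eq_of_mul_eq_one_right ?_
    linear_combination -hpq
  have hpi : ι pc⁻¹ = -ι s := by rw [hs, inv_neg, map_neg, neg_neg]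
  have hS : ι s ^ 2 = -ι q := by
    rw [← map_pow, ← map_neg]; congr 1; rw [hsp]; linear_combination q * hpq
  have hQ : ι q ≠ 0 := by simpa using hq0
  have hne : ∀ k : ℕ, k ≠ 0 → 1 - ι q ^ k ≠ 0 := by
    intro k hk h
    apply hq k hk
    apply ι.injective
    rw [map_pow, map_one]
    exact (sub_eq_zero.1 h).symm
  have P1 : ∀ l m, ι (cf q s (l + 1) m) = ι (cf q s l m) +
      ι s * ι q ^ (2 * l + 1) / ι q ^ m * sh (fun j => ι (cf q s l j)) m := by
    intro l m
    rw [cf_pascal₁ s hq0 hq]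
    cases m <;> simp [sh]
  have P2 : ∀ l m, ι (cf q s (l + 1) m) = ι q ^ (2 * m) * ι (cf q s l m) +
      ι s * ι q ^ m / ι q * sh (fun j => ι (cf q s l j)) m := by
    intro l m
    rw [cf_pascal₂ s hq0 hq]
    cases m <;> simp [sh]
  have hv : ∀ l m, l < m → ι (cf q s l m) = 0 := fun l m h => by rw [cf_gt q s h, map_zero]
  have hE := appE q pc ι x hε' hq0 hq hn y
  have hF := appF q pc ι x hε' hq0 hq hn y
  have hD : ∀ a b, dFB q pc ι ε x y (Fin.last n) (kkn L ε (bas n a) (bas n b)) =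
      (-ι s * ι q ^ a) • kkn L ε (bas n a) (bas n (b + 1)) +
        (1 : L) • kkn L ε (bas n (a + 1)) (bas n b) := by
    intro a b
    rw [dFB_last q pc ι x hε' hn y, hpi, one_smul, add_comm]
  simp only [appList_eq, hpi] at hE hF ⊢
  simp only [xiB_eq q pc hq0 ι, ← hs]
  refine ⟨fun hl => ?_, ?_⟩
  · obtain ⟨k, rfl⟩ : ∃ k, l = k + 1 := ⟨l - 1, by omega⟩
    rw [Nat.add_sub_cancel]
    refine ⟨?_, ?_⟩
    · have h1 : 1 - ι q ^ (2 * (k + 1) + 1) ≠ 0 := hne _ (by omega)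
      rw [Phi_raise _ _ _ hE _ _ (hv _), Phi_raise _ _ _ hD _ _ (hv _),
        Phi_raise _ _ _ hD, Phi_smul, Phi_smul, Phi_add, Phi_smul]
      · simp only [one_mul, map_sub, map_one, map_pow]
        exact Phi_congr fun m hm =>
          coeff_raise (C := fun l m => ι (cf q s l m)) hQ hS P1 P2 x y k h1 hm
      · intro m hm
        cases m with
        | zero => omega
        | succ m => simp [sh, hv k (m + 1) (by omega), hv k m (by omega)]
    · rw [Phi_lower _ _ _ hF (by simp [qnum_zero]) (by simp [qnum_zero]), Phi_smul]
      refine Phi_congr fun m hm => ?_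
      have e1 := congrArg ι (cf_lower₁ s hq0 hq hm)
      have e2 := congrArg ι (cf_lower₂ s hq0 hq hm)
      have e3 : Complex.I * qnum q (k + 1) * qh⁻¹ = pc * qnum q (k + 1) := by rw [hpc]; ring
      have e4 := congrArg ι hsp
      rw [e3]
      simp only [map_mul, map_pow, map_inv₀] at e1 e2 e4 ⊢
      rw [e4] at e1
      linear_combination x⁻¹ * e1 + ι pc * y⁻¹ * e2
  · have h1 : 1 - ι q ≠ 0 := by simpa using hne 1 one_ne_zero
    -- The factor `i·q^{1/2}` of the statement is `s`.
    have e5 : Complex.I * qh = s := by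
      rw [hsp, hpc, ← hqh]; field_simp
    rw [Phi_raise _ _ _ hE _ _ (hv _), Phi_raise _ _ _ hD _ _ (hv _), e5,
      Phi_smul, Phi_smul, Phi_sub, Phi_smul]
    refine Phi_congr fun m hm => ?_
    rw [map_sub, map_one, eq_inv_mul_iff_mul_eq₀ h1]
    have c0 := cf_zero s hq0 hq
    have P := P1 0 1
    simp only [zero_add] at hm P ⊢
    interval_cases m
    · simp only [sh, c0, map_one]
      linear_combination -(x + y) * hS
    · rw [P]
      simp only [sh, c0, map_one, hv 0 1 one_pos]
      field_simp
      ring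

end TetraGQ
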